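/- For a short exact sequence 0 → A → B → C → 0 in C and k ∈ ℕ₀, let ε^{-k} : S^{-k}T^{n+k}(C) → S^{-k+1}T^{n+k}(A) denote the connecting homomorphism between left satellite functors associated to this sequence. Then for every n ∈ ℤ the squares relating ε^{-k} and ε^{-k-1} over the transition morphisms S^{-k}δ̲^{n+k} commute, and the n-th connecting homomorphism of the satellite functor construction is given by δ̂^n = colim_{k ∈ ℕ} ε^{-k} : T̂^n(C) → T̂^{n+1}(A). In particular, δ̲^n : T^n → S^{-1}T^{n+1} is a natural transformation for every n ∈ ℤ. -/

import Mathlib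

open CategoryTheory Category Limits

universe v u v' u'

namespace Mislin

variable (C : Type u) [Category.{v} C] [Abelian C]
variable (D : Type u') [Category.{v'} D] [Abelian D]

/-- A cohomological functor `(T^•, δ^•) : C ⥤ D` (Axioms 2.1–2.2 of the paper):
a family of additive functors together with connecting homomorphisms, natural with respect
to morphisms of short exact sequences, inducing long exact sequences. -/
structure CohomFunctor where
  T : ℤ → C ⥤ D
  additive : ∀ n, (T n).Additive
  δ : ∀ {X : ShortComplex C}, X.ShortExact → ∀ n : ℤ, (T n).obj X.X₃ ⟶ (T (n + 1)).obj X.X₁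
  δ_natural : ∀ {X Y : ShortComplex C} (hX : X.ShortExact) (hY : Y.ShortExact)
    (φ : X ⟶ Y) (n : ℤ),
    (T n).map φ.τ₃ ≫ δ hY n = δ hX n ≫ (T (n + 1)).map φ.τ₁
  zero₁ : ∀ {X : ShortComplex C}, X.ShortExact → ∀ n : ℤ,
    (T n).map X.f ≫ (T n).map X.g = 0
  zero₂ : ∀ {X : ShortComplex C} (hX : X.ShortExact) (n : ℤ),
    (T n).map X.g ≫ δ hX n = 0
  zero₃ : ∀ {X : ShortComplex C} (hX : X.ShortExact) (n : ℤ),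
    δ hX n ≫ (T (n + 1)).map X.f = 0
  exact₁ : ∀ {X : ShortComplex C} (hX : X.ShortExact) (n : ℤ),
    (ShortComplex.mk ((T n).map X.f) ((T n).map X.g) (zero₁ hX n)).Exact
  exact₂ : ∀ {X : ShortComplex C} (hX : X.ShortExact) (n : ℤ),
    (ShortComplex.mk ((T n).map X.g) (δ hX n) (zero₂ hX n)).Exact
  exact₃ : ∀ {X : ShortComplex C} (hX : X.ShortExact) (n : ℤ),
    (ShortComplex.mk (δ hX n) ((T (n + 1)).map X.f) (zero₃ hX n)).Exact

variable {C D}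

/-- A morphism of cohomological functors (Axiom 2.3). -/
structure CohomHom (T U : CohomFunctor C D) where
  app : ∀ n : ℤ, T.T n ⟶ U.T n
  comm : ∀ {X : ShortComplex C} (hX : X.ShortExact) (n : ℤ),
    (app n).app X.X₃ ≫ U.δ hX n = T.δ hX n ≫ (app (n + 1)).app X.X₁

/-- Composition of morphisms of cohomological functors. -/
def CohomHom.comp {T U V : CohomFunctor C D} (f : CohomHom T U) (g : CohomHom U V) :
    CohomHom T V where
  app n := f.app n ≫ g.app n
  comm hX n := by
    simp only [NatTrans.comp_app, Category.assoc]
    rw [g.comm hX n, ← Category.assoc, f.comm hX n, Category.assoc]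

/-- A cohomological functor vanishes on projectives if `T^n(P) = 0` for all projective `P`
and all `n ∈ ℤ`. -/
def VanishesOnProjectives (T : CohomFunctor C D) : Prop :=
  ∀ (n : ℤ) (P : C), Projective P → IsZero ((T.T n).obj P)

/-- `(T̂^•, δ̂^•)` together with `ν : T^• → T̂^•` is a Mislin completion of `(T^•, δ^•)`
(Definition 2.4): it vanishes on projectives and every morphism to a cohomological functor
vanishing on projectives factors uniquely through `ν`. -/
structure IsMislinCompletion (T That : CohomFunctor C D) (ν : CohomHom T That) : Prop where
  vanishes : VanishesOnProjectives That
  factors : ∀ (U : CohomFunctor C D), VanishesOnProjectives U → ∀ φ : CohomHom T U,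
    ∃! ψ : CohomHom That U, ν.comp ψ = φ

/-- The elementary universal property for a colimit (direct limit) of an `ℕ`-indexed
direct system in `D`. -/
structure IsDirectLimit {X : ℕ → D} (f : ∀ k, X k ⟶ X (k + 1)) (L : D)
    (ι : ∀ k, X k ⟶ L) : Prop where
  comm : ∀ k, f k ≫ ι (k + 1) = ι k
  desc : ∀ (Z : D) (g : ∀ k, X k ⟶ Z), (∀ k, f k ≫ g (k + 1) = g k) →
    ∃! u : L ⟶ Z, ∀ k, ι k ≫ u = g k

/-- An abstract system of left satellite functors `S^{-k}T^n` of a cohomological functor `T`,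
in the sense of Cartan–Eilenberg, together with the connecting homomorphisms `ε`, the
factorisation `δ̲` of `δ` through the first left satellite, and its satellites `S^{-k}δ̲`.
Here `S k n` plays the role of `S^{-k}T^n`. -/
structure SatelliteSystem (T : CohomFunctor C D) where
  S : ℕ → ℤ → C ⥤ D
  additive : ∀ k n, (S k n).Additive
  S_zero : ∀ n, S 0 n = T.T n
  /-- connecting homomorphisms of satellite functors, `ε^{-k-1} : S^{-k-1}T^n(X₃) ⟶ S^{-k}T^n(X₁)`. -/
  ε : ∀ {X : ShortComplex C}, X.ShortExact → ∀ (k : ℕ) (n : ℤ),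
    (S (k + 1) n).obj X.X₃ ⟶ (S k n).obj X.X₁
  ε_natural : ∀ {X Y : ShortComplex C} (hX : X.ShortExact) (hY : Y.ShortExact)
    (φ : X ⟶ Y) (k : ℕ) (n : ℤ),
    (S (k + 1) n).map φ.τ₃ ≫ ε hY k n = ε hX k n ≫ (S k n).map φ.τ₁
  /-- higher left satellite functors vanish on projective objects. -/
  vanish : ∀ (k : ℕ) (n : ℤ) (P : C), Projective P → IsZero ((S (k + 1) n).obj P)
  sz₁ : ∀ {X : ShortComplex C}, X.ShortExact → ∀ (k : ℕ) (n : ℤ),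
    (S k n).map X.f ≫ (S k n).map X.g = 0
  sz₂ : ∀ {X : ShortComplex C} (hX : X.ShortExact) (k : ℕ) (n : ℤ),
    (S (k + 1) n).map X.g ≫ ε hX k n = 0
  sz₃ : ∀ {X : ShortComplex C} (hX : X.ShortExact) (k : ℕ) (n : ℤ),
    ε hX k n ≫ (S k n).map X.f = 0
  sexact₁ : ∀ {X : ShortComplex C} (hX : X.ShortExact) (k : ℕ) (n : ℤ),
    (ShortComplex.mk ((S k n).map X.f) ((S k n).map X.g) (sz₁ hX k n)).Exact
  sexact₂ : ∀ {X : ShortComplex C} (hX : X.ShortExact) (k : ℕ) (n : ℤ),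
    (ShortComplex.mk ((S (k + 1) n).map X.g) (ε hX k n) (sz₂ hX k n)).Exact
  sexact₃ : ∀ {X : ShortComplex C} (hX : X.ShortExact) (k : ℕ) (n : ℤ),
    (ShortComplex.mk (ε hX k n) ((S k n).map X.f) (sz₃ hX k n)).Exact
  /-- the natural transformations `S^{-k}δ̲^n : S^{-k}T^n → S^{-k-1}T^{n+1}`. -/
  Sδbar : ∀ (k : ℕ) (n : ℤ), S k n ⟶ S (k + 1) (n + 1)
  /-- `δ^n` factors as `δ̲^n` followed by `ε^{-1}` (Diagram 3.4 of the paper). -/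
  δ_fac : ∀ {X : ShortComplex C} (hX : X.ShortExact) (n : ℤ),
    T.δ hX n =
      eqToHom (congrArg (fun F : C ⥤ D => F.obj X.X₃) (S_zero n).symm) ≫
        (Sδbar 0 n).app X.X₃ ≫ ε hX 0 (n + 1) ≫
          eqToHom (congrArg (fun F : C ⥤ D => F.obj X.X₁) (S_zero (n + 1)))
  /-- the defining compatibility of `S^{-k-1}δ̲` with `S^{-k}δ̲` over the kernel
  monomorphisms `ε`, for short exact sequences with projective middle term. -/
  Sδbar_proj : ∀ {X : ShortComplex C} (hX : X.ShortExact), Projective X.X₂ →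
    ∀ (k : ℕ) (n : ℤ),
    (Sδbar (k + 1) n).app X.X₃ ≫ ε hX (k + 1) (n + 1) =
      ε hX k n ≫ (Sδbar k n).app X.X₁

theorem cast_step (n : ℤ) (k : ℕ) : n + (k : ℤ) + 1 = n + ((k + 1 : ℕ) : ℤ) := by
  push_cast; ring

/-- The `k`-th term `S^{-k}T^{n+k}(M)` of the direct system of the satellite functor
construction. -/
def SatelliteSystem.obj {T : CohomFunctor C D} (SS : SatelliteSystem T) (n : ℤ) (M : C)
    (k : ℕ) : D :=
  (SS.S k (n + (k : ℤ))).obj M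

/-- The transition morphism `S^{-k}δ̲^{n+k} : S^{-k}T^{n+k}(M) ⟶ S^{-k-1}T^{n+k+1}(M)` of the
direct system of the satellite functor construction. -/
def SatelliteSystem.map {T : CohomFunctor C D} (SS : SatelliteSystem T) (n : ℤ) (M : C)
    (k : ℕ) : SS.obj n M k ⟶ SS.obj n M (k + 1) :=
  (SS.Sδbar k (n + (k : ℤ))).app M ≫
    eqToHom (congrArg (fun m : ℤ => (SS.S (k + 1) m).obj M) (cast_step n k))

theorem obj_zero_eq {T : CohomFunctor C D} (SS : SatelliteSystem T) (n : ℤ) (M : C) :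
    (T.T n).obj M = SS.obj n M 0 := by
  show (T.T n).obj M = (SS.S 0 (n + ((0 : ℕ) : ℤ))).obj M
  rw [SS.S_zero]
  norm_num

/-!
A connecting homomorphism is determined by its values on short exact sequences `0 ⟶ K ⟶ P ⟶ M ⟶ 0`
with `P` projective, since every short exact sequence ending in `M` receives a morphism from such a
sequence lifting `𝟙 M`. The squares relating `ε^{-k}` and `ε^{-k-1}` commute for these sequences by
the construction of `S^{-k-1}δ̲`, hence in general, so `colim_k ε^{-k}` exists; exactness of direct
limits makes it the connecting homomorphism of a cohomological functor `T̂^•`, which vanishes on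
projectives because each satellite with `k > 0` does.

If `U^•` vanishes on projectives, then `δ^n : U^n(M) ⟶ U^{n+1}(K)` is invertible. A morphism
`T^• ⟶ U^•` therefore extends uniquely along the maps `ε` to the satellites `S^{-k}T^{n+k} ⟶ U^n`,
and these extensions form the unique factorization through `T̂^•`.
-/

section DirectLimits

variable {E : Type*} [Category* E]

theorem nonempty_isColimit_iff_isDirectLimit {F : ℕ ⥤ E} (c : Cocone F) :
    Nonempty (IsColimit c) ↔
      IsDirectLimit (fun k => F.map (homOfLE (k.le_add_right 1))) c.pt c.ι.app := by
  constructor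
  · rintro ⟨hc⟩
    refine ⟨fun k => c.w _, fun Z g hg => ?_⟩
    let s : Cocone F := ⟨Z, NatTrans.ofSequence g fun k => by simpa using hg k⟩
    exact ⟨hc.desc s, hc.fac s, hc.uniq s⟩
  · intro h
    have existsUnique_desc (s : Cocone F) := h.desc s.pt s.ι.app fun k => s.w _
    exact ⟨{  desc s := (existsUnique_desc s).choose
              fac s := (existsUnique_desc s).choose_spec.1
              uniq s := (existsUnique_desc s).choose_spec.2 }⟩

variable {X : ℕ → E} {f : ∀ k, X k ⟶ X (k + 1)} {L : E} {ι : ∀ k, X k ⟶ L}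

/-- The cocone under the functor `ℕ ⥤ E` generated by a sequence of morphisms `f` that is given by
a compatible family `ι`. -/
def sequenceCocone (hι : ∀ k, f k ≫ ι (k + 1) = ι k) : Cocone (Functor.ofSequence f) where
  pt := L
  ι := NatTrans.ofSequence ι fun k => by
    rw [Functor.ofSequence_map_homOfLE_succ]
    exact (hι k).trans (comp_id _).symm

theorem nonempty_isColimit_sequenceCocone_iff (hι : ∀ k, f k ≫ ι (k + 1) = ι k) :
    Nonempty (IsColimit (sequenceCocone hι)) ↔ IsDirectLimit f L ι := by
  rw [nonempty_isColimit_iff_isDirectLimit]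
  simp only [Functor.ofSequence_map_homOfLE_succ]
  rfl

theorem nonempty_isColimit_mapCocone_sequenceCocone_iff (hι : ∀ k, f k ≫ ι (k + 1) = ι k)
    {E' : Type*} [Category* E'] (G : E ⥤ E') :
    Nonempty (IsColimit (G.mapCocone (sequenceCocone hι))) ↔
      IsDirectLimit (fun k => G.map (f k)) (G.obj L) (fun k => G.map (ι k)) := by
  rw [nonempty_isColimit_iff_isDirectLimit]
  simp only [Functor.comp_map, Functor.ofSequence_map_homOfLE_succ]
  rfl

namespace IsDirectLimit

theorem hom_ext (h : IsDirectLimit f L ι) {Z : E} {u v : L ⟶ Z}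
    (huv : ∀ k, ι k ≫ u = ι k ≫ v) : u = v :=
  (h.desc Z (fun k => ι k ≫ v) fun k => by rw [← assoc, h.comm]).unique huv fun _ => rfl

/-- The morphism out of a direct limit induced by a compatible family. -/
noncomputable def descHom (h : IsDirectLimit f L ι) {Z : E} (g : ∀ k, X k ⟶ Z)
    (hg : ∀ k, f k ≫ g (k + 1) = g k) : L ⟶ Z :=
  (h.desc Z g hg).choose

theorem comp_descHom (h : IsDirectLimit f L ι) {Z : E} (g : ∀ k, X k ⟶ Z)
    (hg : ∀ k, f k ≫ g (k + 1) = g k) (k : ℕ) : ι k ≫ h.descHom g hg = g k :=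
  (h.desc Z g hg).choose_spec.1 k

theorem shift (h : IsDirectLimit f L ι) :
    IsDirectLimit (fun k => f (k + 1)) L (fun k => ι (k + 1)) where
  comm k := h.comm (k + 1)
  desc Z g hg := by
    obtain ⟨u, hu, hu_unique⟩ := h.desc Z (fun k => f k ≫ g k) fun k => by rw [hg]
    refine ⟨u, fun k => by rw [hu, hg], fun v hv => hu_unique v fun k => ?_⟩
    rw [← h.comm k, assoc, hv]

theorem map (h : IsDirectLimit f L ι) {E' : Type*} [Category* E'] (G : E ⥤ E')
    [PreservesColimitsOfShape ℕ G] :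
    IsDirectLimit (fun k => G.map (f k)) (G.obj L) (fun k => G.map (ι k)) := by
  obtain ⟨hc⟩ := (nonempty_isColimit_sequenceCocone_iff h.comm).2 h
  exact (nonempty_isColimit_mapCocone_sequenceCocone_iff h.comm G).1 ⟨isColimitOfPreserves G hc⟩

end IsDirectLimit

theorem isDirectLimit_colimit (f : ∀ k, X k ⟶ X (k + 1)) [HasColimitsOfShape ℕ E] :
    IsDirectLimit f (colimit (Functor.ofSequence f)) (colimit.ι (Functor.ofSequence f)) := by
  have := (nonempty_isColimit_iff_isDirectLimit _).1 ⟨colimit.isColimit (Functor.ofSequence f)⟩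
  simp only [Functor.ofSequence_map_homOfLE_succ] at this
  exact this

end DirectLimits

section ExactColimits

theorem exact_of_forall_exact_evaluation {J : Type*} [Category* J] (S : ShortComplex (J ⥤ D))
    (hS : ∀ j, (S.map ((evaluation J D).obj j)).Exact) : S.Exact := by
  rw [ShortComplex.exact_iff_isZero_homology]
  refine Functor.isZero _ fun j => ?_
  exact ((ShortComplex.exact_iff_isZero_homology _).1 (hS j)).of_iso
    (S.mapHomologyIso ((evaluation J D).obj j)).symm

theorem exact_pt_of_isColimit {J : Type*} [Category* J] [HasColimitsOfShape J D]
    [HasExactColimitsOfShape J D] {F : J ⥤ ShortComplex D} (c : Cocone F)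
    (hc₁ : IsColimit (ShortComplex.π₁.mapCocone c)) (hc₂ : IsColimit (ShortComplex.π₂.mapCocone c))
    (hc₃ : IsColimit (ShortComplex.π₃.mapCocone c)) (hF : ∀ j, (F.obj j).Exact) : c.pt.Exact := by
  let S : ShortComplex (J ⥤ D) :=
    { f := Functor.whiskerLeft F ShortComplex.π₁Toπ₂
      g := Functor.whiskerLeft F ShortComplex.π₂Toπ₃
      zero := by ext j; exact (F.obj j).zero }
  have hS : S.Exact := exact_of_forall_exact_evaluation S hF
  exact colim.exact_mapShortComplex hS hc₁ hc₂ hc₃ c.pt.f c.pt.g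
    (fun j => (c.ι.app j).comm₁₂) (fun j => (c.ι.app j).comm₂₃)

theorem exact_of_isDirectLimit [HasColimitsOfShape ℕ D] [HasExactColimitsOfShape ℕ D]
    {S : ℕ → ShortComplex D} (φ : ∀ k, S k ⟶ S (k + 1)) {L : ShortComplex D} (ι : ∀ k, S k ⟶ L)
    (h₁ : IsDirectLimit (fun k => (φ k).τ₁) L.X₁ (fun k => (ι k).τ₁))
    (h₂ : IsDirectLimit (fun k => (φ k).τ₂) L.X₂ (fun k => (ι k).τ₂))
    (h₃ : IsDirectLimit (fun k => (φ k).τ₃) L.X₃ (fun k => (ι k).τ₃))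
    (hS : ∀ k, (S k).Exact) : L.Exact := by
  have hι (k : ℕ) : φ k ≫ ι (k + 1) = ι k := by
    ext
    exacts [h₁.comm k, h₂.comm k, h₃.comm k]
  obtain ⟨hc₁⟩ := (nonempty_isColimit_mapCocone_sequenceCocone_iff hι ShortComplex.π₁).2 h₁
  obtain ⟨hc₂⟩ := (nonempty_isColimit_mapCocone_sequenceCocone_iff hι ShortComplex.π₂).2 h₂
  obtain ⟨hc₃⟩ := (nonempty_isColimit_mapCocone_sequenceCocone_iff hι ShortComplex.π₃).2 h₃
  exact exact_pt_of_isColimit (sequenceCocone hι) hc₁ hc₂ hc₃ hS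

end ExactColimits

section Presentations

theorem exists_hom_τ₃_eq {X Y : ShortComplex C} [Projective X.X₂] (hY : Y.ShortExact)
    (f : X.X₃ ⟶ Y.X₃) : ∃ φ : X ⟶ Y, φ.τ₃ = f := by
  have := hY.epi_g
  have := hY.mono_f
  let h : X.X₂ ⟶ Y.X₂ := Projective.factorThru (X.g ≫ f) Y.g
  have h_comp_g : h ≫ Y.g = X.g ≫ f := Projective.factorThru_comp _ _
  have f_comp_h_comp_g : (X.f ≫ h) ≫ Y.g = 0 := by
    rw [assoc, h_comp_g, X.zero_assoc, zero_comp]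
  exact ⟨{  τ₁ := hY.exact.lift (X.f ≫ h) f_comp_h_comp_g
            τ₂ := h
            τ₃ := f
            comm₁₂ := hY.exact.lift_f _ _
            comm₂₃ := h_comp_g }, rfl⟩

variable [EnoughProjectives C]

/-- The short exact sequence `0 ⟶ K ⟶ P ⟶ M ⟶ 0` with `P ⟶ M` the chosen epimorphism from a
projective object. -/
noncomputable abbrev presentation (M : C) : ShortComplex C :=
  ShortComplex.mk (kernel.ι (Projective.π M)) (Projective.π M) (kernel.condition _)

theorem presentation_shortExact (M : C) : (presentation M).ShortExact where
  exact := ShortComplex.exact_of_f_is_kernel _ (kernelIsKernel _)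

end Presentations

/-- A connecting homomorphism from `F` to `G`: morphisms `F(X₃) ⟶ G(X₁)` for all short exact
sequences `0 ⟶ X₁ ⟶ X₂ ⟶ X₃ ⟶ 0`, natural in the sequence. -/
@[ext]
structure ConnectingHom {E : Type*} [Category* E] (F G : C ⥤ E) where
  app : ∀ {X : ShortComplex C}, X.ShortExact → (F.obj X.X₃ ⟶ G.obj X.X₁)
  naturality : ∀ {X Y : ShortComplex C} (hX : X.ShortExact) (hY : Y.ShortExact) (φ : X ⟶ Y),
    F.map φ.τ₃ ≫ app hY = app hX ≫ G.map φ.τ₁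

namespace ConnectingHom

variable {E : Type*} [Category* E] {F G F' G' : C ⥤ E}

/-- The composite of a natural transformation with a connecting homomorphism. -/
@[simps]
def precomp (δ : ConnectingHom F G) (α : F' ⟶ F) : ConnectingHom F' G where
  app {X} hX := α.app X.X₃ ≫ δ.app hX
  naturality hX hY φ := by rw [α.naturality_assoc, δ.naturality hX hY, assoc]

/-- The composite of a connecting homomorphism with a natural transformation. -/
@[simps]
def postcomp (δ : ConnectingHom F G) (β : G ⟶ G') : ConnectingHom F G' where
  app {X} hX := δ.app hX ≫ β.app X.X₁
  naturality hX hY φ := by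
    rw [← assoc, δ.naturality hX hY, assoc, assoc, β.naturality]

variable [EnoughProjectives C]

theorem ext_presentation {η θ : ConnectingHom F G}
    (h : ∀ M, η.app (presentation_shortExact M) = θ.app (presentation_shortExact M)) : η = θ := by
  ext X hX
  obtain ⟨φ, hφ⟩ := exists_hom_τ₃_eq (X := presentation X.X₃) hX (𝟙 X.X₃)
  have app_eq (ζ : ConnectingHom F G) :
      ζ.app hX = ζ.app (presentation_shortExact X.X₃) ≫ G.map φ.τ₁ := by
    rw [← ζ.naturality _ hX φ, hφ, F.map_id, id_comp]
  rw [app_eq η, app_eq θ, h]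

theorem precomp_injective {δ : ConnectingHom F G}
    (hδ : ∀ M, Mono (δ.app (presentation_shortExact M))) :
    Function.Injective (δ.precomp : (F' ⟶ F) → ConnectingHom F' G) := by
  intro α β h
  ext M
  have := hδ M
  rw [← cancel_mono (δ.app (presentation_shortExact M))]
  exact congrArg (fun η => η.app (presentation_shortExact M)) h

/-- Dimension shifting: a connecting homomorphism `δ` that is invertible on projective
presentations is terminal among the connecting homomorphisms to its target, so that any other `η`
factors through it. -/
noncomputable def factor (δ : ConnectingHom F G)
    (hδ : ∀ M, IsIso (δ.app (presentation_shortExact M))) (η : ConnectingHom F' G) : F' ⟶ F where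
  app M := η.app (presentation_shortExact M) ≫ inv (δ.app (presentation_shortExact M))
  naturality M N f := by
    obtain ⟨φ, hφ⟩ := exists_hom_τ₃_eq (X := presentation M) (presentation_shortExact N) f
    have hη := η.naturality (presentation_shortExact M) (presentation_shortExact N) φ
    have hδφ := δ.naturality (presentation_shortExact M) (presentation_shortExact N) φ
    rw [hφ] at hη hδφ
    rw [reassoc_of% hη, assoc, ← cancel_mono (δ.app (presentation_shortExact N))]
    simp [hδφ]

@[simp]
theorem precomp_factor (δ : ConnectingHom F G)
    (hδ : ∀ M, IsIso (δ.app (presentation_shortExact M))) (η : ConnectingHom F' G) :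
    δ.precomp (δ.factor hδ η) = η :=
  ext_presentation fun M => by simp [factor]

end ConnectingHom

/-- The connecting homomorphism `δ^n` of a cohomological functor. -/
@[simps]
def CohomFunctor.connectingHom (U : CohomFunctor C D) (n : ℤ) :
    ConnectingHom (U.T n) (U.T (n + 1)) where
  app hX := U.δ hX n
  naturality hX hY φ := U.δ_natural hX hY φ n

theorem VanishesOnProjectives.isIso_δ {U : CohomFunctor C D} (hU : VanishesOnProjectives U)
    {X : ShortComplex C} (hX : X.ShortExact) (hP : Projective X.X₂) (n : ℤ) :
    IsIso (U.δ hX n) := by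
  have : Mono (U.δ hX n) := (U.exact₂ hX n).mono_g ((hU n _ hP).eq_of_src _ _)
  have : Epi (U.δ hX n) := (U.exact₃ hX n).epi_f ((hU (n + 1) _ hP).eq_of_tgt _ _)
  exact isIso_of_mono_of_epi _

theorem VanishesOnProjectives.isIso_connectingHom_app [EnoughProjectives C]
    {U : CohomFunctor C D} (hU : VanishesOnProjectives U) (n : ℤ) (M : C) :
    IsIso ((U.connectingHom n).app (presentation_shortExact M)) :=
  hU.isIso_δ _ inferInstance n

theorem VanishesOnProjectives.natTrans_ext [EnoughProjectives C] {U : CohomFunctor C D}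
    (hU : VanishesOnProjectives U) {F : C ⥤ D} {n : ℤ} {α β : F ⟶ U.T n}
    (h : ∀ {X : ShortComplex C} (hX : X.ShortExact),
      α.app X.X₃ ≫ U.δ hX n = β.app X.X₃ ≫ U.δ hX n) : α = β :=
  ConnectingHom.precomp_injective (δ := U.connectingHom n)
    (fun M => have := hU.isIso_connectingHom_app n M; inferInstance)
    (by ext X hX; exact h hX)

attribute [ext] CohomHom

theorem add_one_add_cast (n : ℤ) (k : ℕ) : n + 1 + (k : ℤ) = n + ((k + 1 : ℕ) : ℤ) := by
  push_cast; ring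

namespace SatelliteSystem

variable {T : CohomFunctor C D} (SS : SatelliteSystem T)

/-- The connecting homomorphism `ε^{-k-1}` from `S^{-k-1}T^m` to `S^{-k}T^m`. -/
@[simps]
def connectingHom (k : ℕ) (m : ℤ) : ConnectingHom (SS.S (k + 1) m) (SS.S k m) where
  app hX := SS.ε hX k m
  naturality hX hY φ := SS.ε_natural hX hY φ k m

theorem connectingHom_precomp_Sδbar [EnoughProjectives C] (k : ℕ) (m : ℤ) :
    (SS.connectingHom (k + 1) (m + 1)).precomp (SS.Sδbar (k + 1) m) =
      (SS.connectingHom k m).postcomp (SS.Sδbar k m) :=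
  ConnectingHom.ext_presentation fun M =>
    SS.Sδbar_proj (presentation_shortExact M) inferInstance k m

theorem Sδbar_comp_ε [EnoughProjectives C] {X : ShortComplex C} (hX : X.ShortExact) (k : ℕ)
    (m : ℤ) :
    (SS.Sδbar (k + 1) m).app X.X₃ ≫ SS.ε hX (k + 1) (m + 1) =
      SS.ε hX k m ≫ (SS.Sδbar k m).app X.X₁ :=
  congrArg (fun η => η.app hX) (SS.connectingHom_precomp_Sδbar k m)

/-- The natural transformation `S^{-k}δ̲^m : S^{-k}T^m ⟶ S^{-k-1}T^{m'}`, where `m'` is any integer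
with a proof of `m + 1 = m'`. Carrying such proofs instead of fixing the expression of the index
keeps `eqToHom` out of the diagrams. -/
def transition (k : ℕ) {m m' : ℤ} (h : m + 1 = m') : SS.S k m ⟶ SS.S (k + 1) m' :=
  SS.Sδbar k m ≫ eqToHom (congrArg (SS.S (k + 1)) h)

theorem transition_rfl (k : ℕ) (m : ℤ) : SS.transition k (rfl : m + 1 = m + 1) = SS.Sδbar k m :=
  comp_id _

theorem transition_app_eq_map (n : ℤ) (M : C) (k : ℕ) :
    (SS.transition k (cast_step n k)).app M = SS.map n M k := by
  rw [transition, NatTrans.comp_app, eqToHom_app]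
  rfl

theorem transition_comp_ε [EnoughProjectives C] {X : ShortComplex C} (hX : X.ShortExact) (k : ℕ)
    {m m' : ℤ} (h : m + 1 = m') :
    (SS.transition (k + 1) h).app X.X₃ ≫ SS.ε hX (k + 1) m' =
      SS.ε hX k m ≫ (SS.transition k h).app X.X₁ := by
  subst h
  simpa only [transition_rfl] using SS.Sδbar_comp_ε hX k m

theorem δ_eq_transition_comp_ε {X : ShortComplex C} (hX : X.ShortExact) (n : ℤ) :
    T.δ hX n =
      (eqToHom (SS.S_zero n).symm).app X.X₃ ≫ (SS.transition 0 rfl).app X.X₃ ≫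
        SS.ε hX 0 (n + 1) ≫ (eqToHom (SS.S_zero (n + 1))).app X.X₁ := by
  rw [transition_rfl, eqToHom_app, eqToHom_app]
  exact SS.δ_fac hX n

section Completion

variable [HasColimitsOfShape ℕ D]

/-- The functor `T̂^n = colim_k S^{-k}T^{n+k}`, formed in the functor category. -/
noncomputable def completionFunctor (n : ℤ) : C ⥤ D :=
  colimit (Functor.ofSequence fun k => SS.transition k (cast_step n k))

/-- The structure morphism `S^{-k}T^m ⟶ T̂^n` of the colimit, for `n + k = m`. -/
noncomputable def completionι (n : ℤ) (k : ℕ) {m : ℤ} (h : n + k = m) :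
    SS.S k m ⟶ SS.completionFunctor n :=
  eqToHom (congrArg (SS.S k) h.symm) ≫
    colimit.ι (Functor.ofSequence fun k => SS.transition k (cast_step n k)) k

theorem eqToHom_comp_completionι_app (n : ℤ) (k : ℕ) {m m' : ℤ} (e : m' = m) (h : n + k = m)
    (M : C) :
    eqToHom (congrArg (fun m => (SS.S k m).obj M) e) ≫ (SS.completionι n k h).app M =
      (SS.completionι n k (h.trans e.symm)).app M := by
  subst e
  exact id_comp _

theorem isDirectLimit_completionι (n : ℤ) {m : ℕ → ℤ} (h : ∀ k : ℕ, n + k = m k)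
    (hm : ∀ k, m k + 1 = m (k + 1)) :
    IsDirectLimit (fun k => SS.transition k (hm k)) (SS.completionFunctor n)
      (fun k => SS.completionι n k (h k)) := by
  obtain rfl : (fun k : ℕ => n + (k : ℤ)) = m := funext h
  have hι : (fun k => SS.completionι n k (h k)) =
      colimit.ι (Functor.ofSequence fun k => SS.transition k (cast_step n k)) :=
    funext fun k => id_comp _
  rw [hι]
  exact isDirectLimit_colimit _

theorem isDirectLimit_completionι_app (n : ℤ) {m : ℕ → ℤ} (h : ∀ k : ℕ, n + k = m k)
    (hm : ∀ k, m k + 1 = m (k + 1)) (M : C) :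
    IsDirectLimit (fun k => (SS.transition k (hm k)).app M) ((SS.completionFunctor n).obj M)
      (fun k => (SS.completionι n k (h k)).app M) :=
  (SS.isDirectLimit_completionι n h hm).map ((evaluation C D).obj M)

theorem isDirectLimit_map (n : ℤ) (M : C) :
    IsDirectLimit (SS.map n M) ((SS.completionFunctor n).obj M)
      (fun k => (SS.completionι n k rfl).app M) := by
  have map_eq : SS.map n M = fun k => (SS.transition k (cast_step n k)).app M :=
    funext fun k => (SS.transition_app_eq_map n M k).symm
  rw [map_eq]
  exact SS.isDirectLimit_completionι_app n (fun _ => rfl) (cast_step n) M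

theorem transition_comp_completionι (n : ℤ) (k : ℕ) {m m' : ℤ} (h : n + k = m) (hm : m + 1 = m')
    (h' : n + (k + 1 : ℕ) = m') :
    SS.transition k hm ≫ SS.completionι n (k + 1) h' = SS.completionι n k h := by
  subst h h'
  exact (SS.isDirectLimit_completionι n (fun _ => rfl) (cast_step n)).comm k

theorem isDirectLimit_completionι_succ_app (n : ℤ) (M : C) :
    IsDirectLimit (fun k => (SS.transition (k + 1) (cast_step n (k + 1))).app M)
      ((SS.completionFunctor n).obj M) (fun k => (SS.completionι n (k + 1) rfl).app M) :=
  (SS.isDirectLimit_completionι_app n (fun _ => rfl) (cast_step n) M).shift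

theorem isDirectLimit_completionι_add_one_app (n : ℤ) (M : C) :
    IsDirectLimit (fun k => (SS.transition k (cast_step n (k + 1))).app M)
      ((SS.completionFunctor (n + 1)).obj M)
      (fun k => (SS.completionι (n + 1) k (add_one_add_cast n k)).app M) :=
  SS.isDirectLimit_completionι_app (n + 1) (add_one_add_cast n) (fun k => cast_step n (k + 1)) M

/-- The canonical natural transformation `ν^n : T^n ⟶ T̂^n`, the structure morphism from the term
`S^0T^n = T^n` of the direct system. -/
noncomputable def completionUnit (n : ℤ) : T.T n ⟶ SS.completionFunctor n :=
  eqToHom (SS.S_zero n).symm ≫ SS.completionι n 0 (add_zero n)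

theorem completionUnit_app (n : ℤ) (M : C) :
    (SS.completionUnit n).app M =
      eqToHom (obj_zero_eq SS n M) ≫ (SS.completionι n 0 rfl).app M := by
  rw [completionUnit, NatTrans.comp_app, eqToHom_app,
    ← SS.eqToHom_comp_completionι_app n 0 (add_zero n).symm rfl, eqToHom_trans_assoc]
  rfl

theorem completionFunctor_additive (n : ℤ) : (SS.completionFunctor n).Additive where
  map_add {M N} f g := by
    refine (SS.isDirectLimit_completionι_app n (fun _ => rfl) (cast_step n) M).hom_ext fun k => ?_
    have := SS.additive k (n + k)
    simp only [Preadditive.comp_add, ← NatTrans.naturality, Functor.map_add, Preadditive.add_comp]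

theorem completionFunctor_map_comp_map (X : ShortComplex C) (n : ℤ) :
    (SS.completionFunctor n).map X.f ≫ (SS.completionFunctor n).map X.g = 0 := by
  have := SS.completionFunctor_additive n
  rw [← Functor.map_comp, X.zero, Functor.map_zero]

theorem exact_completionFunctor_map [HasExactColimitsOfShape ℕ D] {X : ShortComplex C}
    (hX : X.ShortExact) (n : ℤ) :
    (ShortComplex.mk _ _ (SS.completionFunctor_map_comp_map X n)).Exact :=
  exact_of_isDirectLimit
    (S := fun k => .mk _ _ (SS.sz₁ hX k (n + k)))
    (fun k =>
      { τ₁ := (SS.transition k (cast_step n k)).app X.X₁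
        τ₂ := (SS.transition k (cast_step n k)).app X.X₂
        τ₃ := (SS.transition k (cast_step n k)).app X.X₃ })
    (fun k =>
      { τ₁ := (SS.completionι n k rfl).app X.X₁
        τ₂ := (SS.completionι n k rfl).app X.X₂
        τ₃ := (SS.completionι n k rfl).app X.X₃ })
    (SS.isDirectLimit_completionι_app n (fun _ => rfl) (cast_step n) X.X₁)
    (SS.isDirectLimit_completionι_app n (fun _ => rfl) (cast_step n) X.X₂)
    (SS.isDirectLimit_completionι_app n (fun _ => rfl) (cast_step n) X.X₃)
    (fun k => SS.sexact₁ hX k (n + k))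

variable [EnoughProjectives C]

/-- The connecting homomorphism `δ̂^n = colim_k ε^{-k-1}` of the satellite functor construction. -/
noncomputable def completionδ {X : ShortComplex C} (hX : X.ShortExact) (n : ℤ) :
    (SS.completionFunctor n).obj X.X₃ ⟶ (SS.completionFunctor (n + 1)).obj X.X₁ :=
  (SS.isDirectLimit_completionι_succ_app n X.X₃).descHom
    (fun k => SS.ε hX k _ ≫ (SS.completionι (n + 1) k (add_one_add_cast n k)).app X.X₁)
    fun k => by
      rw [← assoc, SS.transition_comp_ε hX, assoc,
        (SS.isDirectLimit_completionι_add_one_app n X.X₁).comm k]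

theorem completionι_comp_completionδ {X : ShortComplex C} (hX : X.ShortExact) (n : ℤ) (k : ℕ)
    {m : ℤ} (h : n + (k + 1 : ℕ) = m) (h' : n + 1 + k = m) :
    (SS.completionι n (k + 1) h).app X.X₃ ≫ SS.completionδ hX n =
      SS.ε hX k m ≫ (SS.completionι (n + 1) k h').app X.X₁ := by
  subst h
  exact (SS.isDirectLimit_completionι_succ_app n X.X₃).comp_descHom _ _ k

theorem completionδ_natural {X Y : ShortComplex C} (hX : X.ShortExact) (hY : Y.ShortExact)
    (φ : X ⟶ Y) (n : ℤ) :
    (SS.completionFunctor n).map φ.τ₃ ≫ SS.completionδ hY n =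
      SS.completionδ hX n ≫ (SS.completionFunctor (n + 1)).map φ.τ₁ := by
  refine (SS.isDirectLimit_completionι_succ_app n X.X₃).hom_ext fun k => ?_
  have hδ {Z : ShortComplex C} (hZ : Z.ShortExact) :=
    SS.completionι_comp_completionδ hZ n k rfl (add_one_add_cast n k)
  rw [← NatTrans.naturality_assoc, hδ hY, ← assoc, SS.ε_natural hX hY, ← assoc, hδ hX, assoc,
    assoc, NatTrans.naturality]

theorem completionFunctor_map_comp_completionδ {X : ShortComplex C} (hX : X.ShortExact) (n : ℤ) :
    (SS.completionFunctor n).map X.g ≫ SS.completionδ hX n = 0 := by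
  refine (SS.isDirectLimit_completionι_succ_app n X.X₂).hom_ext fun k => ?_
  rw [← NatTrans.naturality_assoc,
    SS.completionι_comp_completionδ hX n k rfl (add_one_add_cast n k), ← assoc, SS.sz₂,
    zero_comp, comp_zero]

theorem completionδ_comp_completionFunctor_map {X : ShortComplex C} (hX : X.ShortExact) (n : ℤ) :
    SS.completionδ hX n ≫ (SS.completionFunctor (n + 1)).map X.f = 0 := by
  refine (SS.isDirectLimit_completionι_succ_app n X.X₃).hom_ext fun k => ?_
  rw [← assoc, SS.completionι_comp_completionδ hX n k rfl (add_one_add_cast n k), assoc,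
    ← NatTrans.naturality, ← assoc, SS.sz₃, zero_comp, comp_zero]

theorem completionUnit_comp_completionδ {X : ShortComplex C} (hX : X.ShortExact) (n : ℤ) :
    (SS.completionUnit n).app X.X₃ ≫ SS.completionδ hX n =
      T.δ hX n ≫ (SS.completionUnit (n + 1)).app X.X₁ := by
  have hι : SS.transition 0 rfl ≫ SS.completionι n 1 rfl = SS.completionι n 0 (add_zero n) :=
    SS.transition_comp_completionι n 0 _ _ _
  have hδ : (SS.completionι n 1 rfl).app X.X₃ ≫ SS.completionδ hX n =
      SS.ε hX 0 (n + 1) ≫ (SS.completionι (n + 1) 0 (add_zero (n + 1))).app X.X₁ :=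
    SS.completionι_comp_completionδ hX n 0 _ _
  rw [completionUnit, completionUnit, ← hι, SS.δ_eq_transition_comp_ε hX n]
  simp [hδ]

section Exactness

variable [HasExactColimitsOfShape ℕ D]

theorem exact_completionFunctor_map_completionδ {X : ShortComplex C} (hX : X.ShortExact) (n : ℤ) :
    (ShortComplex.mk _ _ (SS.completionFunctor_map_comp_completionδ hX n)).Exact :=
  exact_of_isDirectLimit
    (S := fun k => .mk _ _ (SS.sz₂ hX k (n + (k + 1 : ℕ))))
    (fun k =>
      { τ₁ := (SS.transition (k + 1) (cast_step n (k + 1))).app X.X₂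
        τ₂ := (SS.transition (k + 1) (cast_step n (k + 1))).app X.X₃
        τ₃ := (SS.transition k (cast_step n (k + 1))).app X.X₁
        comm₂₃ := SS.transition_comp_ε hX k (cast_step n (k + 1)) })
    (fun k =>
      { τ₁ := (SS.completionι n (k + 1) rfl).app X.X₂
        τ₂ := (SS.completionι n (k + 1) rfl).app X.X₃
        τ₃ := (SS.completionι (n + 1) k (add_one_add_cast n k)).app X.X₁
        comm₂₃ := SS.completionι_comp_completionδ hX n k rfl (add_one_add_cast n k) })
    (SS.isDirectLimit_completionι_succ_app n X.X₂)
    (SS.isDirectLimit_completionι_succ_app n X.X₃)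
    (SS.isDirectLimit_completionι_add_one_app n X.X₁)
    (fun k => SS.sexact₂ hX k _)

theorem exact_completionδ_completionFunctor_map {X : ShortComplex C} (hX : X.ShortExact) (n : ℤ) :
    (ShortComplex.mk _ _ (SS.completionδ_comp_completionFunctor_map hX n)).Exact :=
  exact_of_isDirectLimit
    (S := fun k => .mk _ _ (SS.sz₃ hX k (n + (k + 1 : ℕ))))
    (fun k =>
      { τ₁ := (SS.transition (k + 1) (cast_step n (k + 1))).app X.X₃
        τ₂ := (SS.transition k (cast_step n (k + 1))).app X.X₁
        τ₃ := (SS.transition k (cast_step n (k + 1))).app X.X₂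
        comm₁₂ := SS.transition_comp_ε hX k (cast_step n (k + 1)) })
    (fun k =>
      { τ₁ := (SS.completionι n (k + 1) rfl).app X.X₃
        τ₂ := (SS.completionι (n + 1) k (add_one_add_cast n k)).app X.X₁
        τ₃ := (SS.completionι (n + 1) k (add_one_add_cast n k)).app X.X₂
        comm₁₂ := SS.completionι_comp_completionδ hX n k rfl (add_one_add_cast n k) })
    (SS.isDirectLimit_completionι_succ_app n X.X₃)
    (SS.isDirectLimit_completionι_add_one_app n X.X₁)
    (SS.isDirectLimit_completionι_add_one_app n X.X₂)
    (fun k => SS.sexact₃ hX k _)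

/-- The satellite functor construction `(T̂^•, δ̂^•)`. -/
noncomputable def completion : CohomFunctor C D where
  T := SS.completionFunctor
  additive := SS.completionFunctor_additive
  δ := SS.completionδ
  δ_natural := SS.completionδ_natural
  zero₁ {X} _ := SS.completionFunctor_map_comp_map X
  zero₂ := SS.completionFunctor_map_comp_completionδ
  zero₃ := SS.completionδ_comp_completionFunctor_map
  exact₁ := SS.exact_completionFunctor_map
  exact₂ := SS.exact_completionFunctor_map_completionδ
  exact₃ := SS.exact_completionδ_completionFunctor_map

theorem vanishesOnProjectives_completion : VanishesOnProjectives SS.completion := by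
  intro n P hP
  rw [IsZero.iff_id_eq_zero]
  exact (SS.isDirectLimit_completionι_succ_app n P).hom_ext fun k =>
    (SS.vanish k _ P hP).eq_of_src _ _

/-- The canonical morphism `ν : T^• ⟶ T̂^•`. -/
noncomputable def completionν : CohomHom T SS.completion where
  app := SS.completionUnit
  comm := SS.completionUnit_comp_completionδ

end Exactness

end Completion

section UniversalProperty

variable [EnoughProjectives C] {U : CohomFunctor C D} (hU : VanishesOnProjectives U)

/-- The extension `S^{-k}T^m ⟶ U^n`, for `n + k = m`, of a morphism `φ : T^• ⟶ U^•` to satellites,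
obtained by dimension shifting in `U`. -/
noncomputable def satelliteLift (φ : CohomHom T U) :
    ∀ (k : ℕ) {m n : ℤ}, n + k = m → (SS.S k m ⟶ U.T n)
  | 0, _, n, h => eqToHom ((SS.S_zero _).trans (congrArg T.T (h.symm.trans (add_zero n)))) ≫ φ.app n
  | k + 1, m, n, h => (U.connectingHom n).factor (hU.isIso_connectingHom_app n)
      ((SS.connectingHom k m).postcomp (satelliteLift φ k ((add_one_add_cast n k).trans h)))

theorem satelliteLift_zero (φ : CohomHom T U) (n : ℤ) :
    SS.satelliteLift hU φ 0 (add_zero n) = eqToHom (SS.S_zero n) ≫ φ.app n :=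
  rfl

theorem satelliteLift_succ_comp_δ (φ : CohomHom T U) {X : ShortComplex C} (hX : X.ShortExact)
    (k : ℕ) {m n : ℤ} (h : n + (k + 1 : ℕ) = m) (h' : n + 1 + k = m) :
    (SS.satelliteLift hU φ (k + 1) h).app X.X₃ ≫ U.δ hX n =
      SS.ε hX k m ≫ (SS.satelliteLift hU φ k h').app X.X₁ :=
  congrArg (fun η : ConnectingHom _ _ => η.app hX)
    (ConnectingHom.precomp_factor (U.connectingHom n) (hU.isIso_connectingHom_app n)
      ((SS.connectingHom k m).postcomp (SS.satelliteLift hU φ k h')))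

theorem transition_comp_satelliteLift (φ : CohomHom T U) (k : ℕ) {m m' n : ℤ} (h : n + k = m)
    (hm : m + 1 = m') (h' : n + (k + 1 : ℕ) = m') :
    SS.transition k hm ≫ SS.satelliteLift hU φ (k + 1) h' = SS.satelliteLift hU φ k h := by
  induction k generalizing m m' n with
  | zero =>
    obtain rfl : n = m := (add_zero n).symm.trans h
    subst hm
    refine hU.natTrans_ext fun {X} hX => ?_
    rw [NatTrans.comp_app, assoc, SS.satelliteLift_succ_comp_δ hU φ hX 0 _ (add_zero _),
      satelliteLift_zero, satelliteLift_zero, NatTrans.comp_app, NatTrans.comp_app, assoc,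
      φ.comm hX, SS.δ_eq_transition_comp_ε hX]
    simp
  | succ k ih =>
    refine hU.natTrans_ext fun {X} hX => ?_
    have h₁ : n + 1 + k = m := (add_one_add_cast n k).trans h
    have h₁' : n + 1 + (k + 1 : ℕ) = m' := (add_one_add_cast n (k + 1)).trans h'
    calc
      (SS.transition (k + 1) hm ≫ SS.satelliteLift hU φ (k + 2) h').app X.X₃ ≫ U.δ hX n
      _ = (SS.transition (k + 1) hm).app X.X₃ ≫ SS.ε hX (k + 1) m' ≫
            (SS.satelliteLift hU φ (k + 1) h₁').app X.X₁ := by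
          rw [NatTrans.comp_app, assoc, SS.satelliteLift_succ_comp_δ hU φ hX]
      _ = SS.ε hX k m ≫
            (SS.transition k hm ≫ SS.satelliteLift hU φ (k + 1) h₁').app X.X₁ := by
          rw [← assoc, SS.transition_comp_ε, assoc, NatTrans.comp_app]
      _ = SS.ε hX k m ≫ (SS.satelliteLift hU φ k h₁).app X.X₁ := by rw [ih h₁]
      _ = (SS.satelliteLift hU φ (k + 1) h).app X.X₃ ≫ U.δ hX n :=
          (SS.satelliteLift_succ_comp_δ hU φ hX k h h₁).symm

variable [HasColimitsOfShape ℕ D]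

/-- The natural transformation `T̂^n ⟶ U^n` induced by a morphism `φ : T^• ⟶ U^•`. -/
noncomputable def completionDescApp (φ : CohomHom T U) (n : ℤ) : SS.completionFunctor n ⟶ U.T n :=
  (SS.isDirectLimit_completionι n (fun _ => rfl) (cast_step n)).descHom
    (fun k => SS.satelliteLift hU φ k rfl)
    fun k => SS.transition_comp_satelliteLift hU φ k _ _ _

theorem completionι_comp_completionDescApp (φ : CohomHom T U) (n : ℤ) (k : ℕ) {m : ℤ}
    (h : n + k = m) :
    SS.completionι n k h ≫ SS.completionDescApp hU φ n = SS.satelliteLift hU φ k h := by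
  subst h
  exact (SS.isDirectLimit_completionι n (fun _ => rfl) (cast_step n)).comp_descHom _ _ k

theorem completionUnit_comp_completionDescApp (φ : CohomHom T U) (n : ℤ) :
    SS.completionUnit n ≫ SS.completionDescApp hU φ n = φ.app n := by
  rw [completionUnit, assoc, completionι_comp_completionDescApp, satelliteLift_zero,
    eqToHom_trans_assoc, eqToHom_refl, id_comp]

theorem completionDescApp_comp_δ (φ : CohomHom T U) {X : ShortComplex C} (hX : X.ShortExact)
    (n : ℤ) :
    (SS.completionDescApp hU φ n).app X.X₃ ≫ U.δ hX n =
      SS.completionδ hX n ≫ (SS.completionDescApp hU φ (n + 1)).app X.X₁ := by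
  refine (SS.isDirectLimit_completionι_succ_app n X.X₃).hom_ext fun k => ?_
  have h : n + 1 + (k : ℤ) = n + (k + 1 : ℕ) := add_one_add_cast n k
  calc
    (SS.completionι n (k + 1) rfl).app X.X₃ ≫ (SS.completionDescApp hU φ n).app X.X₃ ≫ U.δ hX n
    _ = (SS.satelliteLift hU φ (k + 1) rfl).app X.X₃ ≫ U.δ hX n := by
        rw [← NatTrans.comp_app_assoc, completionι_comp_completionDescApp]
    _ = SS.ε hX k _ ≫ (SS.satelliteLift hU φ k h).app X.X₁ :=
        SS.satelliteLift_succ_comp_δ hU φ hX k rfl h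
    _ = (SS.completionι n (k + 1) rfl).app X.X₃ ≫ SS.completionδ hX n ≫
          (SS.completionDescApp hU φ (n + 1)).app X.X₁ := by
        rw [← assoc, SS.completionι_comp_completionδ hX n k rfl h, assoc, ← NatTrans.comp_app,
          completionι_comp_completionDescApp]

theorem completionι_comp_eq_satelliteLift {φ : CohomHom T U}
    {α : ∀ n, SS.completionFunctor n ⟶ U.T n} (hα : ∀ n, SS.completionUnit n ≫ α n = φ.app n)
    (hαδ : ∀ {X : ShortComplex C} (hX : X.ShortExact) (n : ℤ),
      (α n).app X.X₃ ≫ U.δ hX n = SS.completionδ hX n ≫ (α (n + 1)).app X.X₁)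
    (k : ℕ) {m n : ℤ} (h : n + k = m) :
    SS.completionι n k h ≫ α n = SS.satelliteLift hU φ k h := by
  induction k generalizing m n with
  | zero =>
    obtain rfl : n = m := (add_zero n).symm.trans h
    rw [satelliteLift_zero, ← hα, completionUnit, assoc, eqToHom_trans_assoc, eqToHom_refl, id_comp]
  | succ k ih =>
    refine hU.natTrans_ext fun {X} hX => ?_
    have h₁ : n + 1 + k = m := (add_one_add_cast n k).trans h
    calc
      (SS.completionι n (k + 1) h ≫ α n).app X.X₃ ≫ U.δ hX n
      _ = (SS.completionι n (k + 1) h).app X.X₃ ≫ SS.completionδ hX n ≫ (α (n + 1)).app X.X₁ := by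
          rw [NatTrans.comp_app, assoc, hαδ]
      _ = SS.ε hX k m ≫ (SS.completionι (n + 1) k h₁ ≫ α (n + 1)).app X.X₁ := by
          rw [← assoc, SS.completionι_comp_completionδ hX n k h h₁, assoc, NatTrans.comp_app]
      _ = (SS.satelliteLift hU φ (k + 1) h).app X.X₃ ≫ U.δ hX n := by
          rw [ih h₁, SS.satelliteLift_succ_comp_δ hU φ hX k h h₁]

variable [HasExactColimitsOfShape ℕ D]

/-- The morphism `T̂^• ⟶ U^•` induced by a morphism `φ : T^• ⟶ U^•`. -/
noncomputable def completionDesc (φ : CohomHom T U) : CohomHom SS.completion U where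
  app := SS.completionDescApp hU φ
  comm := SS.completionDescApp_comp_δ hU φ

theorem completionν_comp_completionDesc (φ : CohomHom T U) :
    SS.completionν.comp (SS.completionDesc hU φ) = φ :=
  CohomHom.ext (funext (SS.completionUnit_comp_completionDescApp hU φ))

theorem eq_completionDesc {φ : CohomHom T U} {ψ : CohomHom SS.completion U}
    (hψ : SS.completionν.comp ψ = φ) : ψ = SS.completionDesc hU φ := by
  ext1
  funext n
  refine (SS.isDirectLimit_completionι n (fun _ => rfl) (cast_step n)).hom_ext fun k => ?_
  have hψ_app : ∀ n, SS.completionUnit n ≫ ψ.app n = φ.app n :=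
    fun n => congrArg (fun χ => χ.app n) hψ
  exact (SS.completionι_comp_eq_satelliteLift hU hψ_app ψ.comm k rfl).trans
    (SS.completionι_comp_completionDescApp hU φ n k rfl).symm

theorem isMislinCompletion_completion : IsMislinCompletion T SS.completion SS.completionν where
  vanishes := SS.vanishesOnProjectives_completion
  factors _ hU φ := ⟨SS.completionDesc hU φ, SS.completionν_comp_completionDesc hU φ,
    fun _ hψ => SS.eq_completionDesc hU hψ⟩

end UniversalProperty

end SatelliteSystem

/-- Theorem 3.6. For a short exact sequence `0 → A → B → C → 0` in `C` the
squares relating the satellite connecting homomorphisms `ε^{-k}` and `ε^{-k-1}` over the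
transition morphisms `S^{-k}δ̲` commute, and the `n`-th connecting homomorphism of the
satellite functor construction is `δ̂^n = colim_{k ∈ ℕ} ε^{-k} : T̂^n(C) ⟶ T̂^{n+1}(A)`.
(In particular `δ̲^n : T^n → S^{-1}T^{n+1}` is a natural transformation, which is encoded
here by `Sδbar` being a natural transformation.) -/
theorem satellite_connecting_homomorphisms
    {C : Type u} [Category.{v} C] [Abelian C] [EnoughProjectives C]
    {D : Type u'} [Category.{v'} D] [Abelian D]
    [HasColimitsOfShape ℕ D] [PreservesFiniteLimits (colim : (ℕ ⥤ D) ⥤ D)]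
    (T : CohomFunctor C D) (SS : SatelliteSystem T) :
    (∀ {X : ShortComplex C} (hX : X.ShortExact) (k : ℕ) (m : ℤ),
      (SS.Sδbar (k + 1) m).app X.X₃ ≫ SS.ε hX (k + 1) (m + 1) =
        SS.ε hX k m ≫ (SS.Sδbar k m).app X.X₁) ∧
    (∃ (That : CohomFunctor C D) (ν : CohomHom T That)
      (ι : ∀ (n : ℤ) (M : C) (k : ℕ), SS.obj n M k ⟶ (That.T n).obj M),
      IsMislinCompletion T That ν ∧
      (∀ (n : ℤ) (M : C), IsDirectLimit (SS.map n M) ((That.T n).obj M) (ι n M)) ∧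
      (∀ (n : ℤ) (M : C), (ν.app n).app M = eqToHom (obj_zero_eq SS n M) ≫ ι n M 0) ∧
      (∀ {X : ShortComplex C} (hX : X.ShortExact) (n : ℤ) (k : ℕ),
        ι n X.X₃ (k + 1) ≫ That.δ hX n =
          SS.ε hX k (n + ((k + 1 : ℕ) : ℤ)) ≫
            eqToHom (congrArg (fun m : ℤ => (SS.S k m).obj X.X₁)
              (show n + ((k + 1 : ℕ) : ℤ) = (n + 1) + (k : ℤ) by push_cast; ring)) ≫
            ι (n + 1) X.X₁ k)) := by
  have : HasExactColimitsOfShape ℕ D := ⟨inferInstance⟩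
  refine ⟨SS.Sδbar_comp_ε, SS.completion, SS.completionν,
    fun n M k => (SS.completionι n k rfl).app M, SS.isMislinCompletion_completion,
    SS.isDirectLimit_map, SS.completionUnit_app, fun {X} hX n k => ?_⟩
  have h := add_one_add_cast n k
  exact (SS.completionι_comp_completionδ hX n k rfl h).trans
    (congrArg _ (SS.eqToHom_comp_completionι_app (n + 1) k h.symm rfl X.X₁).symm)

end Mislin
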